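/- Every bimatrix game (Z₁, Z₂) with Z₁, Z₂ ∈ ℝ^{l×m} has at least one Nash equilibrium in mixed strategies. -/

import Mathlib

/-! Assign to a point `z` of the simplex over the pure strategy profiles its two marginals, and let
`C p` consist of those `z` for which the profile `p` is a pair of best replies to the marginals.
The closed sets `C p` cover the simplex, and some `z` lies in `C p` for every `p` with `z p ≠ 0`:
its marginals charge best replies only, so they are an equilibrium.

Such a `z` exists for every finite closed cover of a simplex indexed by its vertices. By compactness
it suffices to find approximate ones. These come from labelling a fine grid by the cover and
applying Scarf's lemma: for linear orders on a finite set with slack elements, some dominating set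
carries all labels, since rooms and doors (sets missing one label) can be counted modulo two. -/

open Finset

section Dominating

variable {I V β : Type*} [LinearOrder β] {r : I → V → β} {S D : Finset V} {m : I → V}

/-- Scarf's notion of a dominating set: no `y` lies above all of `S` in each of the orders `r i`
at once, in the sense that in some order `y` is below every element of `S`. -/
def IsDominating (r : I → V → β) (S : Finset V) : Prop :=
  ∀ y, ∃ i, ∀ x ∈ S, r i y ≤ r i x

theorem IsDominating.mono (hS : IsDominating r S) (hDS : D ⊆ S) : IsDominating r D :=
  fun y => (hS y).imp fun _ hi x hx => hi x (hDS hx)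

/-- `m i` is a minimum of `S` for the order `r i`, for every `i`. -/
def IsArgmin (r : I → V → β) (S : Finset V) (m : I → V) : Prop :=
  ∀ i, m i ∈ S ∧ ∀ x ∈ S, r i (m i) ≤ r i x

theorem exists_isArgmin (r : I → V → β) (hS : S.Nonempty) : ∃ m, IsArgmin r S m :=
  Classical.skolem.1 fun i => S.exists_min_image (r i) hS

theorem IsDominating.image_argmin_eq [Fintype I] [DecidableEq V]
    (hr : ∀ i, (r i).Injective) (hS : IsDominating r S) (hm : IsArgmin r S m) :
    univ.image m = S := by
  refine (image_subset_iff.2 fun i _ => (hm i).1).antisymm fun x hx => ?_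
  obtain ⟨i, hi⟩ := hS x
  exact mem_image.2 ⟨i, mem_univ i, hr i (((hm i).2 x hx).antisymm (hi _ (hm i).1))⟩

/-- The elements exceeding the chosen minimum `m k` in every order `r k` except possibly `r i`.
Adding its maximum for `r i` to a dominating set with minima `m` gives a dominating set again. -/
def upperRegion (r : I → V → β) (m : I → V) (i : I) : Set V :=
  {y | ∀ k ≠ i, r k (m k) < r k y}

theorem IsDominating.le_argmin_of_mem_upperRegion (hD : IsDominating r D) (hm : IsArgmin r D m)
    {i : I} {y : V} (hy : y ∈ upperRegion r m i) : r i y ≤ r i (m i) := by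
  obtain ⟨l, hl⟩ := hD y
  obtain rfl : l = i := by
    by_contra hne
    exact (hy l hne).not_ge (hl _ (hm l).1)
  exact hl _ (hm l).1

theorem IsDominating.notMem_of_mem_upperRegion [Finite I] (hr : ∀ i, (r i).Injective)
    (hD : IsDominating r D) (hm : IsArgmin r D m) {i j : I} (hij : i ≠ j) (hmij : m i = m j)
    {v : V} (hv : v ∈ upperRegion r m i) : v ∉ D := by
  classical
  cases nonempty_fintype I
  intro hvD
  rw [← hD.image_argmin_eq hr hm] at hvD
  obtain ⟨l, -, rfl⟩ := mem_image.1 hvD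
  by_cases hli : l = i
  · rw [hli, hmij] at hv
    exact (hv j hij.symm).false
  · exact (hv l hli).false

theorem IsDominating.insert_of_isMaxOn_upperRegion [DecidableEq V] (hD : IsDominating r D)
    (hm : IsArgmin r D m) {i : I} {v : V} (hv : v ∈ upperRegion r m i)
    (hmax : IsMaxOn (r i) (upperRegion r m i) v) : IsDominating r (insert v D) := by
  intro y
  by_cases hy : y ∈ upperRegion r m i
  · refine ⟨i, forall_mem_insert .. |>.2 ⟨hmax hy, fun x hx => ?_⟩⟩
    exact (hD.le_argmin_of_mem_upperRegion hm hy).trans ((hm i).2 x hx)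
  · obtain ⟨l, hli, hyl⟩ : ∃ l ≠ i, r l y ≤ r l (m l) := by simpa [upperRegion] using hy
    exact ⟨l, forall_mem_insert .. |>.2
      ⟨hyl.trans (hv l hli).le, fun x hx => hyl.trans ((hm l).2 x hx)⟩⟩

variable [Fintype I]

-- The argmin map of `insert v D` is a bijection onto `insert v D`; it takes the value `v` at one
-- index only, and coincides with `m` at the other ones.
theorem IsDominating.exists_isMaxOn_upperRegion [DecidableEq V] (hr : ∀ i, (r i).Injective)
    (hm : IsArgmin r D m) (hcard : #D + 1 = Fintype.card I) {v : V} (hvD : v ∉ D)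
    (hv : IsDominating r (insert v D)) :
    ∃ k, Set.InjOn m {k}ᶜ ∧ v ∈ upperRegion r m k ∧ IsMaxOn (r k) (upperRegion r m k) v := by
  obtain ⟨m', hm'⟩ := exists_isArgmin r (insert_nonempty v D)
  have himage := hv.image_argmin_eq hr hm'
  have hinj : m'.Injective := by
    rw [← Set.injOn_univ, ← coe_univ, ← card_image_iff, himage, card_insert_of_notMem hvD, hcard,
      card_univ]
  obtain ⟨k, -, hk⟩ := mem_image.1 (himage ▸ mem_insert_self v D)
  have hmem : ∀ l ≠ k, m' l ∈ D := fun l hl =>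
    mem_of_mem_insert_of_ne (hm' l).1 fun h => hl (hinj (h.trans hk.symm))
  have hmm' : ∀ l ≠ k, m' l = m l := fun l hl =>
    hr l (((hm' l).2 _ (mem_insert_of_mem (hm l).1)).antisymm ((hm l).2 _ (hmem l hl)))
  refine ⟨k, fun a ha b hb hab => ?_, fun l hl => ?_, fun y hy => ?_⟩
  · exact hinj (by rw [hmm' a ha, hmm' b hb, hab])
  · rw [← hmm' l hl]
    refine ((hm' l).2 v (mem_insert_self v D)).lt_of_ne fun h => hvD ?_
    exact hr l h ▸ hmem l hl
  · obtain ⟨l, hl⟩ := hv y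
    obtain rfl : l = k := by
      by_contra hne
      exact (hy l hne).not_ge (hl _ (mem_insert_of_mem (hm l).1))
    exact hl v (mem_insert_self v D)

variable [Fintype V]

open scoped Classical in
/-- The dominating sets with one element for each order, the rooms of Scarf's parity argument. -/
noncomputable def rooms (r : I → V → β) : Finset (Finset V) :=
  {S | #S = Fintype.card I ∧ IsDominating r S}

theorem mem_rooms : S ∈ rooms r ↔ #S = Fintype.card I ∧ IsDominating r S := by simp [rooms]

-- As `m : I → D` is onto and `#D + 1 = #I`, exactly two indices `i`, `j` have the same minimum.
-- The two rooms arise by adding to `D` the maximum of the upper region of `i` or of `j`.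
theorem even_card_rooms_above [DecidableEq V] (hr : ∀ i, (r i).Injective)
    (hcard : #D + 1 = Fintype.card I) (hm : IsArgmin r D m)
    (hne : ∀ i, (upperRegion r m i).Nonempty) :
    Even #{S ∈ rooms r | D ⊆ S} := by
  by_cases hD : IsDominating r D
  swap
  · rw [filter_false_of_mem fun S hS hDS => hD ((mem_rooms.1 hS).2.mono hDS)]
    simp
  obtain ⟨i, -, j, -, hij, hmij⟩ := exists_ne_map_eq_of_card_lt_of_maps_to
    (by rw [card_univ]; lia : #D < #(univ : Finset I)) fun i _ => (hm i).1
  have hmax : ∀ i, ∃ v ∈ upperRegion r m i, IsMaxOn (r i) (upperRegion r m i) v :=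
    fun i => Set.exists_max_image _ _ (Set.toFinite _) (hne i)
  obtain ⟨a, ha, hamax⟩ := hmax i
  obtain ⟨b, hb, hbmax⟩ := hmax j
  have haD := hD.notMem_of_mem_upperRegion hr hm hij hmij ha
  have hbD := hD.notMem_of_mem_upperRegion hr hm hij.symm hmij.symm hb
  have hab : a ≠ b := by
    rintro rfl
    exact (hb i hij).not_ge (hD.le_argmin_of_mem_upperRegion hm ha)
  suffices h : {S ∈ rooms r | D ⊆ S} = {insert a D, insert b D} by
    rw [h, card_pair fun h => hab ((insert_inj haD).1 h)]
    exact even_two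
  ext S
  simp only [mem_filter, mem_rooms, mem_insert, mem_singleton]
  constructor
  · rintro ⟨⟨hS, hdom⟩, hDS⟩
    obtain ⟨v, hvD, rfl⟩ := exists_eq_insert_iff.2 ⟨hDS, hcard.trans hS.symm⟩
    obtain ⟨k, hinj, hv, hvmax⟩ := hdom.exists_isMaxOn_upperRegion hr hm hcard hvD
    have hk : k = i ∨ k = j := by
      by_contra! h
      exact hij (hinj h.1.symm h.2.symm hmij)
    rcases hk with rfl | rfl
    · exact .inl (congrArg (insert · D) (hr _ ((hamax hv).antisymm (hvmax ha))))
    · exact .inr (congrArg (insert · D) (hr _ ((hbmax hv).antisymm (hvmax hb))))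
  · rintro (rfl | rfl)
    · exact ⟨⟨by rw [card_insert_of_notMem haD, hcard],
        hD.insert_of_isMaxOn_upperRegion hm ha hamax⟩, subset_insert ..⟩
    · exact ⟨⟨by rw [card_insert_of_notMem hbD, hcard],
        hD.insert_of_isMaxOn_upperRegion hm hb hbmax⟩, subset_insert ..⟩

end Dominating

section Doors

variable {I V : Type*} [DecidableEq I] {c : V → I} {i₀ : I} {S D : Finset V}

theorem image_erase_of_map_eq [DecidableEq V] {a b : V} (hb : b ∈ S) (hab : a ≠ b)
    (hc : c a = c b) : (S.erase a).image c = S.image c := by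
  ext i
  grind

variable [Fintype I] [Fintype V]

/-- The sets which carry every label but `i₀`, each exactly once. -/
def doors (c : V → I) (i₀ : I) : Finset (Finset V) :=
  {D | #D + 1 = Fintype.card I ∧ D.image c = univ.erase i₀}

theorem mem_doors : D ∈ doors c i₀ ↔ #D + 1 = Fintype.card I ∧ D.image c = univ.erase i₀ := by
  simp [doors]

theorem injOn_of_mem_doors (hD : D ∈ doors c i₀) : Set.InjOn c D := by
  obtain ⟨hcard, himage⟩ := mem_doors.1 hD
  rw [← card_image_iff, himage, card_erase_of_mem (mem_univ _), card_univ]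
  lia

-- If `a ≠ b` in `S` have the same label, a door in `S` misses `a` or `b`, and dropping one
-- is as good as dropping the other.
theorem even_card_doors_below [DecidableEq V] (hS : #S = Fintype.card I) (hne : S.image c ≠ univ) :
    Even #{D ∈ doors c i₀ | D ⊆ S} := by
  obtain ⟨a, ha, b, hb, hab, hcab⟩ : ∃ a ∈ S, ∃ b ∈ S, a ≠ b ∧ c a = c b := by
    by_contra! h
    exact hne (eq_univ_of_card _ ((card_image_of_injOn fun a ha b hb hab =>
      not_imp_not.1 (h a ha b hb) hab).trans hS))
  have himage_a : (S.erase a).image c = S.image c := image_erase_of_map_eq hb hab hcab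
  have himage_b : (S.erase b).image c = S.image c := image_erase_of_map_eq ha hab.symm hcab.symm
  have hsub : ∀ D ∈ doors c i₀, D ⊆ S → D = S.erase a ∨ D = S.erase b := by
    intro D hD hDS
    obtain ⟨v, hvD, rfl⟩ := exists_eq_insert_iff.2 ⟨hDS, (mem_doors.1 hD).1.trans hS.symm⟩
    have := injOn_of_mem_doors hD
    by_contra! h
    have hav : a ≠ v := by rintro rfl; simp [hvD] at h
    have hbv : b ≠ v := by rintro rfl; simp [hvD] at h
    exact hab (this (mem_of_mem_insert_of_ne ha hav) (mem_of_mem_insert_of_ne hb hbv) hcab)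
  by_cases hi₀ : S.image c = univ.erase i₀
  · suffices h : {D ∈ doors c i₀ | D ⊆ S} = {S.erase a, S.erase b} by
      rw [h, card_pair fun h => hab ((erase_inj _ ha).1 h)]
      exact even_two
    ext D
    simp only [mem_filter, mem_insert, mem_singleton]
    refine ⟨fun h => hsub D h.1 h.2, ?_⟩
    rintro (rfl | rfl)
    · exact ⟨mem_doors.2 ⟨by rw [card_erase_add_one ha, hS], himage_a.trans hi₀⟩, erase_subset ..⟩
    · exact ⟨mem_doors.2 ⟨by rw [card_erase_add_one hb, hS], himage_b.trans hi₀⟩, erase_subset ..⟩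
  · rw [filter_false_of_mem fun D hD hDS => hi₀ ?_]
    · simp
    · rw [← (mem_doors.1 hD).2]
      rcases hsub D hD hDS with rfl | rfl
      exacts [himage_a.symm, himage_b.symm]

end Doors

section Slack

variable {I V β : Type*} [LinearOrder β] {r : I → V → β} {e : I → V}

/-- Slack elements in the sense of Scarf's lemma: `e i` is the least element for the order `r i`,
and lies above all non-slack elements in the other orders. They encode the faces of a simplex. -/
structure IsSlack (r : I → V → β) (e : I → V) : Prop where
  lt_of_ne : ∀ i v, v ≠ e i → r i (e i) < r i v
  lt_of_notMem_range : ∀ i k, i ≠ k → ∀ v ∉ Set.range e, r k v < r k (e i)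

namespace IsSlack

theorem le (he : IsSlack r e) (i : I) (v : V) : r i (e i) ≤ r i v := by
  rcases eq_or_ne v (e i) with rfl | hv
  exacts [le_rfl, (he.lt_of_ne i v hv).le]

theorem injective (he : IsSlack r e) {w : V} (hw : w ∉ Set.range e) : e.Injective := by
  intro i k hik
  by_contra hne
  have hwi := he.lt_of_notMem_range i k hne w hw
  rw [hik] at hwi
  exact (he.le k w).not_gt hwi

theorem mem_upperRegion (he : IsSlack r e) {D : Finset V} {m : I → V} (hm : IsArgmin r D m)
    {w : V} (hwD : w ∈ D) (hw : w ∉ Set.range e) (i : I) : e i ∈ upperRegion r m i :=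
  fun k hk => ((hm k).2 w hwD).trans_lt (he.lt_of_notMem_range i k hk.symm w hw)

variable [Fintype I] [DecidableEq I]

section

variable [Fintype V] [DecidableEq V]

theorem card_rooms_above_image_erase (he : IsSlack r e) (hr : ∀ i, (r i).Injective) {w : V}
    (hw : w ∉ Set.range e) (i₀ : I) :
    #{S ∈ rooms r | (univ.erase i₀).image e ⊆ S} = 1 := by
  obtain ⟨a, ha, hamax⟩ := Set.exists_max_image (Set.range e)ᶜ (r i₀) (Set.toFinite _) ⟨w, hw⟩
  have hcard : #((univ.erase i₀).image e) + 1 = Fintype.card I := by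
    rw [card_image_of_injective _ (he.injective hw), card_erase_add_one (mem_univ _), card_univ]
  have hmem : ∀ k ≠ i₀, e k ∈ (univ.erase i₀).image e := fun k hk =>
    mem_image_of_mem e (mem_erase.2 ⟨hk, mem_univ k⟩)
  have hnot_le : ∀ k, ¬ r k a ≤ r k (e k) := fun k =>
    (he.lt_of_ne k a fun h => ha ⟨k, h.symm⟩).not_ge
  refine card_eq_one.2 ⟨insert a ((univ.erase i₀).image e), ?_⟩
  ext S
  simp only [mem_filter, mem_rooms, mem_singleton]
  constructor
  · rintro ⟨⟨hS, hdom⟩, hsub⟩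
    obtain ⟨v, hv, rfl⟩ := exists_eq_insert_iff.2 ⟨hsub, hcard.trans hS.symm⟩
    obtain ⟨l, hl⟩ := hdom a
    obtain rfl : l = i₀ := by
      by_contra h
      exact hnot_le l (hl _ (mem_insert_of_mem (hmem l h)))
    have hav := hl v (mem_insert_self _ _)
    have hv_range : v ∉ Set.range e := by
      rintro ⟨k, rfl⟩
      rcases eq_or_ne k l with rfl | hk
      exacts [hnot_le k hav, hv (hmem k hk)]
    rw [hr l ((hamax v hv_range).antisymm hav)]
  · rintro rfl
    have ha_image : a ∉ (univ.erase i₀).image e := fun h =>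
      ha (by obtain ⟨k, -, hk⟩ := mem_image.1 h; exact ⟨k, hk⟩)
    refine ⟨⟨by rw [card_insert_of_notMem ha_image, hcard], fun y => ?_⟩, subset_insert ..⟩
    by_cases hy : y ∈ Set.range e
    · obtain ⟨k, rfl⟩ := hy
      exact ⟨k, fun x _ => he.le k x⟩
    · refine ⟨i₀, forall_mem_insert .. |>.2 ⟨hamax y hy, forall_mem_image.2 fun k hk => ?_⟩⟩
      exact (he.lt_of_notMem_range k i₀ (ne_of_mem_erase hk) y hy).le

theorem even_card_rooms_above_of_mem_doors (he : IsSlack r e) (hr : ∀ i, (r i).Injective)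
    {c : V → I} (hc : ∀ i, c (e i) = i) {i₀ : I} {D : Finset V} (hD : D ∈ doors c i₀)
    (hne : D ≠ (univ.erase i₀).image e) : Even #{S ∈ rooms r | D ⊆ S} := by
  obtain ⟨hcard, himage⟩ := mem_doors.1 hD
  obtain ⟨w, hwD, hw⟩ : ∃ w ∈ D, w ∉ Set.range e := by
    by_contra! h
    refine hne ?_
    have hec : ∀ v ∈ D, e (c v) = v := fun v hv => by
      obtain ⟨i, rfl⟩ := h v hv
      rw [hc]
    rw [← himage, image_image]
    exact (image_congr hec |>.trans image_id).symm
  obtain ⟨m, hm⟩ := exists_isArgmin r ⟨w, hwD⟩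
  exact even_card_rooms_above hr hcard hm fun i => ⟨e i, he.mem_upperRegion hm hwD hw i⟩

end

-- If there were no such `S`, every room would contain an even number of doors, whereas exactly one
-- door, the set of all slack elements but `e i₀`, is contained in an odd number of rooms.
theorem exists_isDominating_image_eq_univ_of_injective [Finite V] (he : IsSlack r e)
    (hr : ∀ i, (r i).Injective) {c : V → I} (hc : ∀ i, c (e i) = i) {w : V} (hw : w ∉ Set.range e) :
    ∃ S, IsDominating r S ∧ S.image c = univ := by
  classical
  cases nonempty_fintype V
  by_contra! hno
  let i₀ := c w
  have houter : (univ.erase i₀).image e ∈ doors c i₀ := by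
    refine mem_doors.2 ⟨?_, ?_⟩
    · rw [card_image_of_injective _ (he.injective hw), card_erase_add_one (mem_univ _), card_univ]
    · rw [image_image, show c ∘ e = id from funext hc, image_id]
  have heven : Even (∑ S ∈ rooms r, #{D ∈ doors c i₀ | D ⊆ S}) :=
    even_sum _ fun S hS =>
      even_card_doors_below (mem_rooms.1 hS).1 (hno S (mem_rooms.1 hS).2)
  have hodd : Odd (∑ D ∈ doors c i₀, #{S ∈ rooms r | D ⊆ S}) := by
    rw [← add_sum_erase _ _ houter, he.card_rooms_above_image_erase hr hw i₀]
    refine Even.one_add (even_sum _ fun D hD => ?_)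
    exact he.even_card_rooms_above_of_mem_doors hr hc (mem_of_mem_erase hD) (ne_of_mem_erase hD)
  have hcount : ∑ D ∈ doors c i₀, #{S ∈ rooms r | D ⊆ S} =
      ∑ S ∈ rooms r, #{D ∈ doors c i₀ | D ⊆ S} := by
    simp only [card_filter]
    exact sum_comm
  rw [hcount] at hodd
  exact Nat.not_even_iff_odd.2 hodd heven

-- Ties are broken lexicographically by an enumeration of `V`.
theorem exists_isDominating_image_eq_univ [Finite V] (he : IsSlack r e) {c : V → I}
    (hc : ∀ i, c (e i) = i) {w : V} (hw : w ∉ Set.range e) :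
    ∃ S, IsDominating r S ∧ S.image c = univ := by
  obtain ⟨n, ⟨E⟩⟩ := Finite.exists_equiv_fin V
  let r' : I → V → β ×ₗ Fin n := fun i v => toLex (r i v, E v)
  have hr'_lt : ∀ i u v, r i u < r i v → r' i u < r' i v := fun i u v h =>
    Prod.Lex.toLex_lt_toLex.2 (.inl h)
  have hr' : ∀ i, (r' i).Injective := fun i u v h =>
    E.injective (congrArg Prod.snd (toLex.injective h))
  have he' : IsSlack r' e :=
    ⟨fun i v hv => hr'_lt _ _ _ (he.lt_of_ne i v hv),
      fun i k hik v hv => hr'_lt _ _ _ (he.lt_of_notMem_range i k hik v hv)⟩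
  obtain ⟨S, hS, hSc⟩ := he'.exists_isDominating_image_eq_univ_of_injective hr' hc hw
  refine ⟨S, fun y => (hS y).imp fun i hi x hx => ?_, hSc⟩
  exact le_of_not_gt fun h => (hr'_lt i x y h).not_ge (hi x hx)

end IsSlack

end Slack

section Labelling

-- Each label `i` is turned into a slack element labelled `i`; the labels whose slack element is
-- missing from Scarf's dominating set are those which occur in its non-slack part.
theorem exists_subset_forall_exists_forall_le {I V β : Type*} [Finite I] [LinearOrder β]
    (T : Finset V) (r : I → V → β) (c : V → I) :
    ∃ D ⊆ T, ∀ y ∈ T, ∃ z ∈ D, ∀ x ∈ D, r (c z) y ≤ r (c z) x := by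
  classical
  cases nonempty_fintype I
  rcases T.eq_empty_or_nonempty with rfl | ⟨w, hw⟩
  · exact ⟨∅, empty_subset _, by simp⟩
  let r' : I → T ⊕ I → WithBot (WithTop β) := fun k =>
    Sum.elim (fun v => ((r k v : WithTop β) : WithBot (WithTop β)))
      fun i => if i = k then ⊥ else ⊤
  have hslack : IsSlack r' Sum.inr := by
    refine ⟨fun i v hv => ?_, fun i k hik v hv => ?_⟩
    · rcases v with v | j
      · simp [r']
      · have hji : j ≠ i := fun h => hv (congrArg Sum.inr h)
        simp [r', hji]
    · rcases v with v | j
      · simp only [r', Sum.elim_inl, Sum.elim_inr, hik, if_false]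
        exact WithBot.coe_lt_coe.2 (WithTop.coe_lt_top _)
      · exact absurd ⟨j, rfl⟩ hv
  obtain ⟨S, hS, hSc⟩ := hslack.exists_isDominating_image_eq_univ
    (c := Sum.elim (fun v => c v) id) (fun _ => rfl) (w := Sum.inl ⟨w, hw⟩) (by simp)
  refine ⟨S.toLeft.map (.subtype _), map_subtype_subset _, fun y hy => ?_⟩
  obtain ⟨i, hi⟩ := hS (Sum.inl ⟨y, hy⟩)
  have hiS : Sum.inr i ∉ S := fun h => by simpa [r'] using hi _ h
  obtain ⟨z | k, hz, rfl⟩ := mem_image.1 (hSc ▸ mem_univ i)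
  · refine ⟨z, mem_map_of_mem _ (mem_toLeft.2 hz), (forall_mem_map ..).2 fun x hx => ?_⟩
    simpa [r'] using hi _ (mem_toLeft.1 hx)
  · exact absurd hz hiS

variable {I : Type*} [Fintype I]

theorem exists_le_sum_eq_of_sum_le [Nonempty I] {f : I → ℕ} {N : ℕ} (hf : ∑ i, f i ≤ N) :
    ∃ g, f ≤ g ∧ ∑ i, g i = N := by
  classical
  let i₀ := Classical.arbitrary I
  refine ⟨f + Pi.single i₀ (N - ∑ i, f i), le_self_add, ?_⟩
  simp [sum_add_distrib, hf]

theorem lt_add_card_of_sum_lt_sum_add_one {m x : I → ℕ} (hmx : m ≤ x)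
    (hsum : ∑ i, x i < ∑ i, (m i + 1)) (k : I) : x k < m k + Fintype.card I := by
  classical
  have hrest : ∑ i ∈ univ.erase k, m i ≤ ∑ i ∈ univ.erase k, x i := sum_le_sum fun i _ => hmx i
  rw [sum_add_distrib, ← add_sum_erase _ m (mem_univ k), ← add_sum_erase _ x (mem_univ k),
    ← card_eq_sum_ones, card_univ] at hsum
  lia

-- `m i` is the least `i`-th coordinate in the dominating set `D` if `i` occurs as a label there,
-- and `0` otherwise. A grid point above `m + 1` would contradict dominance.
theorem exists_subset_piAntidiag_lowerBound [DecidableEq I] (N : ℕ) (c : (I → ℕ) → I) :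
    ∃ D ⊆ piAntidiag univ N, D.Nonempty ∧ ∃ m : I → ℕ, (∀ x ∈ D, m ≤ x) ∧
      N < ∑ i, (m i + 1) ∧ ∀ i, m i = 0 ∨ ∃ y ∈ D, c y = i := by
  have : Nonempty I := ⟨c 0⟩
  obtain ⟨D, hDN, hD⟩ :=
    exists_subset_forall_exists_forall_le (piAntidiag univ N) (fun i (x : I → ℕ) => x i) c
  obtain ⟨g, -, hg⟩ := exists_le_sum_eq_of_sum_le (f := (0 : I → ℕ)) (N := N) (by simp)
  obtain ⟨x₀, hx₀, -⟩ := hD g (by simp [hg])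
  have hm : ∀ i, ∃ m, (∀ x ∈ D, m ≤ x i) ∧
      ((∀ y ∈ D, c y ≠ i) ∧ m = 0 ∨ (∃ y ∈ D, c y = i) ∧ ∃ x ∈ D, x i = m) := by
    intro i
    by_cases hi : ∃ y ∈ D, c y = i
    · obtain ⟨x, hx, hmin⟩ := D.exists_min_image (· i) ⟨x₀, hx₀⟩
      exact ⟨x i, hmin, .inr ⟨hi, x, hx, rfl⟩⟩
    · exact ⟨0, fun _ _ => Nat.zero_le _, .inl ⟨by simpa using hi, rfl⟩⟩
  choose m hm_le hm using hm
  refine ⟨D, hDN, ⟨x₀, hx₀⟩, m, fun x hx i => hm_le i x hx, ?_,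
    fun i => (hm i).imp And.right And.left⟩
  by_contra! hle
  obtain ⟨y, hmy, hy⟩ := exists_le_sum_eq_of_sum_le hle
  obtain ⟨z, hz, hyz⟩ := hD y (by simp [hy])
  rcases hm (c z) with ⟨hno, -⟩ | ⟨-, x, hx, hxm⟩
  · exact hno z hz rfl
  · have := hyz x hx
    have := hmy (c z)
    lia

theorem exists_forall_lt_card_or_exists_label_eq [DecidableEq I] (N : ℕ) (c : (I → ℕ) → I) :
    ∃ x ∈ piAntidiag univ N, ∀ i, x i < Fintype.card I ∨
      ∃ y ∈ piAntidiag univ N, c y = i ∧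
        ∀ k, x k < y k + Fintype.card I ∧ y k < x k + Fintype.card I := by
  obtain ⟨D, hDN, ⟨x, hx⟩, m, hm, hsum, hlabel⟩ := exists_subset_piAntidiag_lowerBound N c
  have hlt : ∀ x ∈ D, ∀ k, x k < m k + Fintype.card I := fun x hx =>
    lt_add_card_of_sum_lt_sum_add_one (hm x hx)
      ((mem_piAntidiag.1 (hDN hx)).1.trans_lt hsum)
  refine ⟨x, hDN hx, fun i => (hlabel i).imp (fun hmi => ?_) ?_⟩
  · simpa [hmi] using hlt x hx i
  · rintro ⟨y, hy, hyi⟩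
    refine ⟨y, hDN hy, hyi, fun k => ⟨?_, ?_⟩⟩
    · exact (hlt x hx k).trans_le (Nat.add_le_add_right (hm y hy k) _)
    · exact (hlt y hy k).trans_le (Nat.add_le_add_right (hm x hx k) _)

end Labelling

section Covering

theorem exists_mem_forall_mem_of_approx {X ι : Type*} [PseudoMetricSpace X] {K : Set X}
    {A : ι → Set X} (hK : IsCompact K) (hA : ∀ i, IsClosed (A i))
    (h : ∀ ε > 0, ∃ x ∈ K, ∀ i, ∃ y ∈ A i, dist x y ≤ ε) : ∃ x ∈ K, ∀ i, x ∈ A i := by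
  have hcont : LowerSemicontinuous fun x => ⨆ i, Metric.infEDist x (A i) :=
    lowerSemicontinuous_iSup fun i => Metric.continuous_infEDist.lowerSemicontinuous
  have hne : K.Nonempty := (h 1 one_pos).imp fun _ hx => hx.1
  obtain ⟨x, hxK, hmin⟩ := (hcont.lowerSemicontinuousOn K).exists_isMinOn hne hK
  have hzero : ⨆ i, Metric.infEDist x (A i) ≤ 0 := by
    refine ENNReal.le_of_forall_pos_le_add fun ε hε _ => ?_
    obtain ⟨u, huK, hu⟩ := h ε hε
    refine (hmin huK).trans (iSup_le fun i => ?_)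
    obtain ⟨y, hy, huy⟩ := hu i
    rw [zero_add, ← ENNReal.ofReal_coe_nnreal]
    exact (Metric.infEDist_le_edist_of_mem hy).trans (edist_le_ofReal ε.2 |>.2 huy)
  refine ⟨x, hxK, fun i => (Metric.mem_iff_infEDist_zero_of_closed (hA i)).2 ?_⟩
  exact nonpos_iff_eq_zero.1 ((le_iSup _ i).trans hzero)

variable {I : Type*} [Fintype I]

theorem div_mem_stdSimplex_of_mem_piAntidiag [DecidableEq I] {N : ℕ} (hN : N ≠ 0) {x : I → ℕ}
    (hx : x ∈ piAntidiag univ N) : (fun k => (x k / N : ℝ)) ∈ stdSimplex ℝ I := by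
  refine ⟨fun k => by positivity, ?_⟩
  rw [← sum_div, ← Nat.cast_sum, (mem_piAntidiag.1 hx).1, div_self (Nat.cast_ne_zero.2 hN)]

theorem exists_mem_stdSimplex_forall_exists_dist_le [Nonempty I] {C : I → Set (I → ℝ)}
    (hcover : stdSimplex ℝ I ⊆ ⋃ i, C i) {ε : ℝ} (hε : 0 < ε) :
    ∃ x ∈ stdSimplex ℝ I, ∀ i, ∃ y ∈ {z | z i = 0} ∪ C i, dist x y ≤ ε := by
  classical
  obtain ⟨N, hN⟩ := exists_nat_gt (Fintype.card I / ε)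
  have hN_pos : (0 : ℝ) < N := (by positivity : (0 : ℝ) ≤ Fintype.card I / ε).trans_lt hN
  have hN_ne : N ≠ 0 := by exact_mod_cast hN_pos.ne'
  rw [div_lt_iff₀ hε] at hN
  have hlabel : ∀ x ∈ piAntidiag univ N, ∃ i : I, (fun k => (x k / N : ℝ)) ∈ C i := fun x hx =>
    Set.mem_iUnion.1 (hcover (div_mem_stdSimplex_of_mem_piAntidiag hN_ne hx))
  choose! c hc using hlabel
  obtain ⟨x, hx, hclose⟩ := exists_forall_lt_card_or_exists_label_eq N c
  refine ⟨_, div_mem_stdSimplex_of_mem_piAntidiag hN_ne hx, fun i => ?_⟩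
  rcases hclose i with hxi | ⟨y, hy, rfl, hxy⟩
  · refine ⟨Function.update (fun k => (x k / N : ℝ)) i 0, .inl (Function.update_self ..), ?_⟩
    refine (dist_pi_le_iff hε.le).2 fun k => ?_
    rcases eq_or_ne k i with rfl | hk
    · have : (x k : ℝ) ≤ Fintype.card I := by exact_mod_cast hxi.le
      rw [Function.update_self, Real.dist_0_eq_abs, abs_of_nonneg (by positivity),
        div_le_iff₀ hN_pos]
      linarith
    · simpa [hk] using hε.le
  · refine ⟨_, .inr (hc y hy), (dist_pi_le_iff hε.le).2 fun k => ?_⟩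
    have hxyk : (x k : ℝ) < y k + Fintype.card I := by exact_mod_cast (hxy k).1
    have hyxk : (y k : ℝ) < x k + Fintype.card I := by exact_mod_cast (hxy k).2
    rw [Real.dist_eq, ← sub_div, abs_div, abs_of_pos hN_pos, div_le_iff₀ hN_pos, abs_le]
    constructor <;> linarith

theorem exists_mem_stdSimplex_forall_eq_zero_or_mem [Nonempty I] {C : I → Set (I → ℝ)}
    (hC : ∀ i, IsClosed (C i)) (hcover : stdSimplex ℝ I ⊆ ⋃ i, C i) :
    ∃ z ∈ stdSimplex ℝ I, ∀ i, z i = 0 ∨ z ∈ C i :=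
  exists_mem_forall_mem_of_approx (A := fun i => {z : I → ℝ | z i = 0} ∪ C i)
    (isCompact_stdSimplex ℝ I)
    (fun i => (isClosed_eq (continuous_apply i) continuous_const).union (hC i))
    fun _ hε => exists_mem_stdSimplex_forall_exists_dist_le hcover hε

end Covering

section Equilibrium

variable {ι κ : Type*} [Fintype ι] [Fintype κ]

-- Cover the simplex over `ι × κ` by the sets on which `(i, j)` is a pair of best replies to the
-- marginals; a distribution `z` charging only pairs of best replies has the required marginals.
theorem exists_mem_stdSimplex_forall_ne_zero_imp_le [Nonempty ι] [Nonempty κ]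
    {F : (ι → ℝ) × (κ → ℝ) → ι → ℝ} {G : (ι → ℝ) × (κ → ℝ) → κ → ℝ}
    (hF : Continuous F) (hG : Continuous G) :
    ∃ x ∈ stdSimplex ℝ ι, ∃ y ∈ stdSimplex ℝ κ,
      (∀ i, x i ≠ 0 → ∀ k, F (x, y) k ≤ F (x, y) i) ∧
      (∀ j, y j ≠ 0 → ∀ k, G (x, y) k ≤ G (x, y) j) := by
  let marginals : (ι × κ → ℝ) → (ι → ℝ) × (κ → ℝ) := fun z =>
    (fun i => ∑ j, z (i, j), fun j => ∑ i, z (i, j))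
  have hmarg : Continuous marginals := by fun_prop
  let C : ι × κ → Set (ι × κ → ℝ) := fun p =>
    {z | (∀ k, F (marginals z) k ≤ F (marginals z) p.1) ∧
      ∀ k, G (marginals z) k ≤ G (marginals z) p.2}
  have hC : ∀ p, IsClosed (C p) := fun p => by
    simp only [C, Set.ofPred_and, Set.ofPred_forall]
    exact (isClosed_iInter fun k => isClosed_le (by fun_prop) (by fun_prop)).inter
      (isClosed_iInter fun k => isClosed_le (by fun_prop) (by fun_prop))
  have hcover : stdSimplex ℝ (ι × κ) ⊆ ⋃ p, C p := fun z _ => by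
    obtain ⟨i, hi⟩ := Finite.exists_max (F (marginals z))
    obtain ⟨j, hj⟩ := Finite.exists_max (G (marginals z))
    exact Set.mem_iUnion.2 ⟨(i, j), hi, hj⟩
  obtain ⟨z, ⟨hz_nonneg, hz_sum⟩, hz⟩ := exists_mem_stdSimplex_forall_eq_zero_or_mem hC hcover
  rw [Fintype.sum_prod_type] at hz_sum
  refine ⟨(marginals z).1, ⟨fun i => sum_nonneg fun j _ => hz_nonneg _, hz_sum⟩,
    (marginals z).2, ⟨fun j => sum_nonneg fun i _ => hz_nonneg _, sum_comm.trans hz_sum⟩,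
    fun i hi => ?_, fun j hj => ?_⟩
  · obtain ⟨j, -, hij⟩ := exists_ne_zero_of_sum_ne_zero hi
    exact ((hz (i, j)).resolve_left hij).1
  · obtain ⟨i, -, hij⟩ := exists_ne_zero_of_sum_ne_zero hj
    exact ((hz (i, j)).resolve_left hij).2

theorem dotProduct_le_of_forall_ne_zero_imp_le {a p q : ι → ℝ} (hp : p ∈ stdSimplex ℝ ι)
    (hq : q ∈ stdSimplex ℝ ι) (h : ∀ i, p i ≠ 0 → ∀ k, a k ≤ a i) : q ⬝ᵥ a ≤ p ⬝ᵥ a := by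
  have hle : ∀ k, a k ≤ p ⬝ᵥ a := fun k =>
    calc a k = ∑ i, p i * a k := by rw [← sum_mul, hp.2, one_mul]
      _ ≤ ∑ i, p i * a i := sum_le_sum fun i _ => by
        rcases eq_or_ne (p i) 0 with hi | hi
        · simp [hi]
        · exact mul_le_mul_of_nonneg_left (h i hi k) (hp.1 i)
  calc ∑ i, q i * a i ≤ ∑ i, q i * (p ⬝ᵥ a) :=
        sum_le_sum fun i _ => mul_le_mul_of_nonneg_left (hle i) (hq.1 i)
    _ = p ⬝ᵥ a := by rw [← sum_mul, hq.2, one_mul]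

open Matrix in
theorem stmt_9_general [Nonempty ι] [Nonempty κ] (Z₁ Z₂ : Matrix ι κ ℝ) :
    ∃ x ∈ stdSimplex ℝ ι, ∃ y ∈ stdSimplex ℝ κ,
      (∀ x' ∈ stdSimplex ℝ ι, x' ⬝ᵥ Z₁ *ᵥ y ≤ x ⬝ᵥ Z₁ *ᵥ y) ∧
      (∀ y' ∈ stdSimplex ℝ κ, x ⬝ᵥ Z₂ *ᵥ y' ≤ x ⬝ᵥ Z₂ *ᵥ y) := by
  obtain ⟨x, hx, y, hy, hx_best, hy_best⟩ := exists_mem_stdSimplex_forall_ne_zero_imp_le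
    (F := fun p => Z₁ *ᵥ p.2) (G := fun p => p.1 ᵥ* Z₂) (by fun_prop) (by fun_prop)
  refine ⟨x, hx, y, hy, fun x' hx' => dotProduct_le_of_forall_ne_zero_imp_le hx hx' hx_best,
    fun y' hy' => ?_⟩
  simp only [dotProduct_mulVec, dotProduct_comm (x ᵥ* Z₂)]
  exact dotProduct_le_of_forall_ne_zero_imp_le hy hy' hy_best

end Equilibrium

/-- every bimatrix game has at least one Nash equilibrium in mixed
strategies. -/
theorem stmt_9 (l m : ℕ) (hl : 0 < l) (hm : 0 < m)
    (Z1 Z2 : Matrix (Fin l) (Fin m) ℝ) :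
    ∃ (x : Fin l → ℝ) (y : Fin m → ℝ),
      (∀ i, 0 ≤ x i) ∧ (∑ i, x i = 1) ∧ (∀ j, 0 ≤ y j) ∧ (∑ j, y j = 1) ∧
      (∀ x' : Fin l → ℝ, (∀ i, 0 ≤ x' i) → ∑ i, x' i = 1 →
        ∑ i, ∑ j, x' i * Z1 i j * y j ≤ ∑ i, ∑ j, x i * Z1 i j * y j) ∧
      (∀ y' : Fin m → ℝ, (∀ j, 0 ≤ y' j) → ∑ j, y' j = 1 →
        ∑ i, ∑ j, x i * Z2 i j * y' j ≤ ∑ i, ∑ j, x i * Z2 i j * y j) := by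
  have : NeZero l := ⟨hl.ne'⟩
  have : NeZero m := ⟨hm.ne'⟩
  simpa [stdSimplex, dotProduct, Matrix.mulVec, mul_sum, mul_assoc, and_assoc] using
    stmt_9_general Z1 Z2
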